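/- arXiv:1006.5636 — 3 statements merged into one kernel-verified Lean document; each statement's English description precedes it below -/
import Mathlib

section
/- Let L be a finite-dimensional Lie algebra over a field F, let M be a maximal subalgebra of L, and let B be an ideal of L with B ⊆ M. Let C/B be an ideal completion of M/B in L/B, put k(C/B) = K/B (so K is the preimage in L of the strict core of C/B), and let D be an ideal completion of M in L. Then the quotient Lie algebras C/K and D/k(D) are isomorphic. -/
/-- The strict core `k(B)` of a subalgebra `B` of `L`: the sum of all ideals of `L` that are
proper subalgebras of `B`. -/
def strictCore {F L : Type*} [Field F] [LieRing L] [LieAlgebra F L]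
    (B : LieSubalgebra F L) : LieIdeal F L :=
  sSup {I : LieIdeal F L | (I : LieSubalgebra F L) < B}

/-- `C` is a completion of the maximal subalgebra `M` of `L` if `C` is not contained in `M`
but every proper subalgebra of `C` that is an ideal of `L` is contained in `M`.
The set of completions of `M` is the index complex `I(M)`. -/
def IsCompletion {F L : Type*} [Field F] [LieRing L] [LieAlgebra F L]
    (M C : LieSubalgebra F L) : Prop :=
  ¬ C ≤ M ∧ ∀ I : LieIdeal F L, (I : LieSubalgebra F L) < C → (I : LieSubalgebra F L) ≤ M

/-- A maximal completion of `M`: a maximal element of the index complex `I(M)` under inclusion. -/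
def IsMaxCompletion {F L : Type*} [Field F] [LieRing L] [LieAlgebra F L]
    (M C : LieSubalgebra F L) : Prop :=
  IsCompletion M C ∧ ∀ D : LieSubalgebra F L, IsCompletion M D → C ≤ D → C = D

/-- The quotient of a subalgebra `C` of `L` by (the pullback along the inclusion of) an ideal
`K` of `L`. -/
abbrev quotIn {F L : Type*} [Field F] [LieRing L] [LieAlgebra F L]
    (C : LieSubalgebra F L) (K : LieIdeal F L) : Type _ :=
  C ⧸ LieIdeal.comap C.incl K

/-- The quotient Lie algebra `C / k(C)`. -/
abbrev quotCore {F L : Type*} [Field F] [LieRing L] [LieAlgebra F L]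
    (C : LieSubalgebra F L) : Type _ :=
  quotIn C (strictCore C)

/-- The largest ideal of `L` contained in the subalgebra `B`, denoted `B_L`. -/
def idealCore {F L : Type*} [Field F] [LieRing L] [LieAlgebra F L]
    (B : LieSubalgebra F L) : LieIdeal F L :=
  sSup {I : LieIdeal F L | (I : LieSubalgebra F L) ≤ B}

/-- A subalgebra `B` of `L` is a c-ideal of `L` if there is an ideal `C` of `L` such that
`L = B + C` and `B ∩ C ≤ B_L`. -/
def IsCIdeal {F L : Type*} [Field F] [LieRing L] [LieAlgebra F L]
    (B : LieSubalgebra F L) : Prop :=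
  ∃ C : LieIdeal F L, B ⊔ (C : LieSubalgebra F L) = ⊤ ∧
    B ⊓ (C : LieSubalgebra F L) ≤ (idealCore B : LieSubalgebra F L)

/-- A Lie algebra is supersolvable if it has a chain of ideals
`0 = I_0 ⊆ I_1 ⊆ ... ⊆ I_n = L` with `dim I_j = j` for each `j`. -/
def IsSupersolvableLieAlgebra (F L : Type*) [Field F] [LieRing L] [LieAlgebra F L] : Prop :=
  ∃ (n : ℕ) (I : Fin (n + 1) → LieIdeal F L), I 0 = ⊥ ∧ I (Fin.last n) = ⊤ ∧
    Monotone I ∧ ∀ j : Fin (n + 1), Module.finrank F (I j) = (j : ℕ)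

/-- The natural quotient map `L → L ⧸ B` as a morphism of Lie algebras. -/
def lieQuotMk {F L : Type*} [Field F] [LieRing L] [LieAlgebra F L] (B : LieIdeal F L) :
    L →ₗ⁅F⁆ L ⧸ B :=
  { (LieSubmodule.Quotient.mk' B).toLinearMap with
    map_lie' := rfl }

/-- A subalgebra `C` of `L` is a subideal of `L` if there is a chain of subalgebras
`C = C_0 ⊆ C_1 ⊆ ... ⊆ C_n = L` in which each `C_i` is an ideal of `C_{i+1}`. -/
def IsSubideal {F L : Type*} [Field F] [LieRing L] [LieAlgebra F L]
    (C : LieSubalgebra F L) : Prop :=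
  ∃ (n : ℕ) (f : Fin (n + 1) → LieSubalgebra F L), f 0 = C ∧ f (Fin.last n) = ⊤ ∧
    ∀ i : Fin n, f i.castSucc ≤ f i.succ ∧
      ∀ x ∈ f i.succ, ∀ y ∈ f i.castSucc, ⁅x, y⁆ ∈ f i.castSucc

/-- The Frattini subalgebra: the intersection of all maximal subalgebras of `L`. -/
def frattiniSubalgebra (F L : Type*) [Field F] [LieRing L] [LieAlgebra F L] :
    LieSubalgebra F L :=
  sInf {M : LieSubalgebra F L | IsCoatom M}

/-- The Frattini ideal: the largest ideal of `L` contained in the Frattini subalgebra. -/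
def frattiniIdeal (F L : Type*) [Field F] [LieRing L] [LieAlgebra F L] : LieIdeal F L :=
  idealCore (frattiniSubalgebra F L)

/-- The properties of an ideal completion `C` of `M` and its strict core `K` on which the
isomorphism type of `C / K` depends. They are stable under pulling back along surjections. -/
structure IsCompletionCore {F L : Type*} [Field F] [LieRing L] [LieAlgebra F L]
    (M : LieSubalgebra F L) (C K : LieIdeal F L) : Prop where
  not_le : ¬ (C : LieSubalgebra F L) ≤ M
  le_max : (K : LieSubalgebra F L) ≤ M
  le_core : ∀ I : LieIdeal F L, I ≤ C → (I : LieSubalgebra F L) ≤ M → I ≤ K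
  le_of_not_le : ∀ I : LieIdeal F L, K ≤ I → I ≤ C → ¬ (I : LieSubalgebra F L) ≤ M → C ≤ I
  le_completion : K ≤ C

namespace IsCompletionCore

variable {F L : Type*} [Field F] [LieRing L] [LieAlgebra F L]

theorem of_isCompletion {M : LieSubalgebra F L} {C : LieIdeal F L}
    (hC : IsCompletion M (C : LieSubalgebra F L)) :
    IsCompletionCore M C (strictCore (C : LieSubalgebra F L)) where
  not_le := hC.1
  le_max := by
    have h : (strictCore (C : LieSubalgebra F L)).toSubmodule ≤ M.toSubmodule := by
      rw [strictCore, LieSubmodule.sSup_toSubmodule]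
      refine sSup_le ?_
      rintro _ ⟨I, hI, rfl⟩
      exact hC.2 I hI
    exact h
  le_core I hIC hIM := le_sSup <| show (I : LieSubalgebra F L) < C from
    lt_of_le_of_ne hIC fun h => hC.1 (h ▸ hIM)
  le_of_not_le I _ hIC hIM := by
    by_contra h
    exact hIM (hC.2 I (lt_of_le_not_ge hIC h))
  le_completion := sSup_le fun _ hI => le_of_lt hI

theorem comap {L' : Type*} [LieRing L'] [LieAlgebra F L'] {f : L →ₗ⁅F⁆ L'}
    (hf : Function.Surjective f) {M : LieSubalgebra F L}
    (hfM : (f.ker : LieSubalgebra F L) ≤ M) {C : LieIdeal F L} (hfC : f.ker ≤ C)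
    {K : LieIdeal F L'} (h : IsCompletionCore (M.map f) (C.map f) K) :
    IsCompletionCore M C (K.comap f) := by
  have mem_of_map {x : L} (hx : f x ∈ M.map f) : x ∈ M := by
    obtain ⟨m, hm, hmx⟩ := hx
    have hk : x - m ∈ f.ker := by
      rw [LieHom.mem_ker, map_sub, sub_eq_zero]
      exact hmx.symm
    simpa using add_mem (hfM hk) hm
  have mem_map_ideal {I : LieIdeal F L} (hI : f.ker ≤ I) {x : L} (hx : f x ∈ I.map f) :
      x ∈ I := by
    obtain ⟨⟨y, hy⟩, hyx⟩ := LieIdeal.mem_map_of_surjective hf hx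
    have hk : x - y ∈ f.ker := by
      rw [LieHom.mem_ker, map_sub, sub_eq_zero]
      exact hyx.symm
    simpa using add_mem (hI hk) hy
  have map_le {I : LieIdeal F L} (hI : (I : LieSubalgebra F L) ≤ M) :
      ((I.map f : LieIdeal F L') : LieSubalgebra F L') ≤ M.map f := by
    intro x hx
    obtain ⟨⟨y, hy⟩, rfl⟩ := LieIdeal.mem_map_of_surjective hf hx
    exact ⟨y, hI hy, rfl⟩
  have le_of_map_le {I : LieIdeal F L}
      (hI : ((I.map f : LieIdeal F L') : LieSubalgebra F L') ≤ M.map f) :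
      (I : LieSubalgebra F L) ≤ M :=
    fun x hx => mem_of_map (hI (LieIdeal.mem_map hx))
  have hfK : f.ker ≤ K.comap f := by
    intro x hx
    rw [LieHom.mem_ker] at hx
    rw [LieIdeal.mem_comap, hx]
    exact zero_mem K
  refine ⟨fun hC => h.not_le (map_le hC), fun x hx => mem_of_map (h.le_max hx), ?_, ?_, ?_⟩
  · intro I hIC hIM
    exact LieIdeal.map_le_iff_le_comap.1 (h.le_core _ (LieIdeal.map_mono hIC) (map_le hIM))
  · intro I hKI hIC hIM x hx
    refine mem_map_ideal (hfK.trans hKI)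
      (h.le_of_not_le _ ?_ (LieIdeal.map_mono hIC) (fun hI => hIM (le_of_map_le hI))
        (LieIdeal.mem_map hx))
    intro y hy
    obtain ⟨z, rfl⟩ := hf y
    exact LieIdeal.mem_map (hKI (show z ∈ K.comap f from hy))
  · exact fun x hx => mem_map_ideal hfC (h.le_completion hx)

end IsCompletionCore

/-- A relation between two Lie algebras that is total on both sides, compatible with the
operations, and matches the ideals `I` and `J` induces an isomorphism of the quotients. -/
theorem nonempty_quotient_lieEquiv_of_rel {F A A' : Type*} [Field F] [LieRing A] [LieAlgebra F A]
    [LieRing A'] [LieAlgebra F A'] (I : LieIdeal F A) (J : LieIdeal F A') (r : A → A' → Prop)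
    (hadd : ∀ a b a' b', r a b → r a' b' → r (a + a') (b + b'))
    (hsmul : ∀ (t : F) a b, r a b → r (t • a) (t • b))
    (hlie : ∀ a b a' b', r a b → r a' b' → r ⁅a, a'⁆ ⁅b, b'⁆)
    (hleft : ∀ a, ∃ b, r a b) (hright : ∀ b, ∃ a, r a b)
    (hmem : ∀ a b, r a b → (a ∈ I ↔ b ∈ J)) :
    Nonempty ((A ⧸ I) ≃ₗ⁅F⁆ A' ⧸ J) := by
  choose f hf using hleft
  have mk_eq {a b b'} (h : r a b) (h' : r a b') : lieQuotMk J b = lieQuotMk J b' := by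
    have hr := hadd _ _ _ _ h (hsmul (-1) _ _ h')
    simp only [neg_smul, one_smul, add_neg_cancel, ← sub_eq_add_neg] at hr
    rw [← sub_eq_zero, ← map_sub]
    exact (LieSubmodule.Quotient.mk_eq_zero J).2 ((hmem _ _ hr).1 (zero_mem I))
  let g : A →ₗ⁅F⁆ A' ⧸ J :=
    { toFun := fun a => lieQuotMk J (f a)
      map_add' := fun a a' => by
        rw [← map_add]
        exact mk_eq (hf _) (hadd _ _ _ _ (hf a) (hf a'))
      map_smul' := fun t a => by
        rw [RingHom.id_apply, ← map_smul]
        exact mk_eq (hf _) (hsmul _ _ _ (hf a))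
      map_lie' := fun {a a'} => by
        rw [← LieHom.map_lie]
        exact mk_eq (hf _) (hlie _ _ _ _ (hf a) (hf a')) }
  have hker : g.ker = I := by
    ext a
    rw [LieHom.mem_ker, hmem _ _ (hf a)]
    exact LieSubmodule.Quotient.mk_eq_zero J
  have hrange : g.range = ⊤ := by
    rw [LieHom.range_eq_top]
    intro y
    obtain ⟨b, rfl⟩ := LieSubmodule.Quotient.surjective_mk' J y
    obtain ⟨a, ha⟩ := hright b
    exact ⟨a, mk_eq (hf a) ha⟩
  subst hker
  exact ⟨g.quotKerEquivRange.trans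
    ((LieEquiv.ofEq _ _ (congrArg _ hrange)).trans LieSubalgebra.topEquiv)⟩

/-- An ideal that is not contained in a maximal subalgebra supplements it. -/
theorem exists_add_eq_of_isCoatom {F L : Type*} [Field F] [LieRing L] [LieAlgebra F L]
    {M : LieSubalgebra F L} (hM : IsCoatom M) {D : LieIdeal F L}
    (hD : ¬ (D : LieSubalgebra F L) ≤ M) (x : L) : ∃ m ∈ M, ∃ d ∈ D, m + d = x := by
  let S : LieSubalgebra F L :=
    { M.toSubmodule ⊔ D.toSubmodule with
      lie_mem' := by
        intro x y hx hy
        obtain ⟨m, hm, d, hd, rfl⟩ := Submodule.mem_sup.1 hx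
        obtain ⟨m', hm', d', hd', rfl⟩ := Submodule.mem_sup.1 hy
        refine Submodule.mem_sup.2 ⟨⁅m, m'⁆, M.lie_mem hm hm', ⁅m, d'⁆ + ⁅d, m' + d'⁆,
          add_mem (lie_mem_right F L D _ _ hd') (lie_mem_left F L D _ _ hd), ?_⟩
        simp only [add_lie, lie_add]
        abel }
  have hMS : M ≤ S := fun y hy => Submodule.mem_sup_left (S := M.toSubmodule) hy
  have hDS : (D : LieSubalgebra F L) ≤ S :=
    fun y hy => Submodule.mem_sup_right (T := D.toSubmodule) hy
  have hS : S = ⊤ := hM.2 S (lt_of_le_not_ge hMS fun h => hD (hDS.trans h))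
  have hx : x ∈ S := hS ▸ LieSubalgebra.mem_top x
  exact Submodule.mem_sup.1 hx

/-- If `C ∩ D ⊆ M` and `D` supplements `M`, then `C ∩ M` is an ideal, hence lies in the core. -/
theorem IsCompletionCore.mem_core_of_inf_le {F L : Type*} [Field F] [LieRing L] [LieAlgebra F L]
    {M : LieSubalgebra F L} (hM : IsCoatom M) {C D K : LieIdeal F L}
    (hC : IsCompletionCore M C K) (hD : ¬ (D : LieSubalgebra F L) ≤ M)
    (hCD : ∀ x ∈ C, x ∈ D → x ∈ M) {x : L} (hxC : x ∈ C) (hxM : x ∈ M) : x ∈ K := by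
  let I : LieIdeal F L :=
    { C.toSubmodule ⊓ M.toSubmodule with
      lie_mem := by
        rintro y z ⟨hzC, hzM⟩
        refine ⟨lie_mem_right F L C _ _ hzC, ?_⟩
        obtain ⟨m, hm, d, hd, rfl⟩ := exists_add_eq_of_isCoatom hM hD y
        rw [add_lie]
        exact add_mem (M.lie_mem hm hzM)
          (hCD _ (lie_mem_right F L C _ _ hzC) (lie_mem_left F L D _ _ hd)) }
  exact hC.le_core I (fun _ hy => hy.1) (fun _ hy => hy.2) (show x ∈ I from ⟨hxC, hxM⟩)

/-- If `C ∩ D ⊄ M`, then `C = (C ∩ D) + K`. -/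
theorem IsCompletionCore.exists_sub_mem {F L : Type*} [Field F] [LieRing L] [LieAlgebra F L]
    {M : LieSubalgebra F L} {C D K : LieIdeal F L} (hC : IsCompletionCore M C K)
    (hCD : ¬ ((C ⊓ D : LieIdeal F L) : LieSubalgebra F L) ≤ M) {c : L} (hc : c ∈ C) :
    ∃ d ∈ D, c - d ∈ K := by
  have h := hC.le_of_not_le (C ⊓ D ⊔ K) le_sup_right (sup_le inf_le_left hC.le_completion)
    (fun h => hCD (le_trans (show C ⊓ D ≤ C ⊓ D ⊔ K from le_sup_left) h)) hc
  obtain ⟨d, hd, k, hk, rfl⟩ := (LieSubmodule.mem_sup _ _ _).1 h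
  exact ⟨d, hd.2, by simpa using hk⟩

/-- Any two ideal completions of a maximal subalgebra have isomorphic quotients by their cores. -/
theorem IsCompletionCore.nonempty_lieEquiv {F L : Type*} [Field F] [LieRing L] [LieAlgebra F L]
    {M : LieSubalgebra F L} (hM : IsCoatom M) {C D K KD : LieIdeal F L}
    (hC : IsCompletionCore M C K) (hD : IsCompletionCore M D KD) :
    Nonempty (quotIn (C : LieSubalgebra F L) K ≃ₗ⁅F⁆ quotIn (D : LieSubalgebra F L) KD) := by
  by_cases hCD : ((C ⊓ D : LieIdeal F L) : LieSubalgebra F L) ≤ M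
  · have hCD' : ∀ x ∈ C, x ∈ D → x ∈ M := fun x hx hx' => hCD (show x ∈ C ⊓ D from ⟨hx, hx'⟩)
    have hDC' : ∀ x ∈ D, x ∈ C → x ∈ M := fun x hx hx' => hCD' x hx' hx
    refine nonempty_quotient_lieEquiv_of_rel _ _ (fun c d => (c : L) + (d : L) ∈ M)
      ?_ ?_ ?_ ?_ ?_ ?_
    · intro c d c' d' h h'
      simpa [add_add_add_comm] using add_mem h h'
    · intro t c d h
      simpa using M.smul_mem t h
    · rintro ⟨c, hc⟩ ⟨d, hd⟩ ⟨c', hc'⟩ ⟨d', hd'⟩ h h'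
      have hcd : ⁅c, d'⁆ ∈ M :=
        hCD' _ (lie_mem_left F L C _ _ hc) (lie_mem_right F L D _ _ hd')
      have hdc : ⁅d, c'⁆ ∈ M :=
        hCD' _ (lie_mem_right F L C _ _ hc') (lie_mem_left F L D _ _ hd)
      have key : ⁅c, c'⁆ + ⁅d, d'⁆ = ⁅c + d, c' + d'⁆ - ⁅c, d'⁆ - ⁅d, c'⁆ := by
        simp only [add_lie, lie_add]
        abel
      change ⁅c, c'⁆ + ⁅d, d'⁆ ∈ M
      rw [key]
      exact sub_mem (sub_mem (M.lie_mem h h') hcd) hdc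
    · rintro ⟨c, hc⟩
      obtain ⟨m, hm, d, hd, rfl⟩ := exists_add_eq_of_isCoatom hM hD.not_le c
      exact ⟨⟨-d, neg_mem (S := LieIdeal F L) hd⟩, by simpa using hm⟩
    · rintro ⟨d, hd⟩
      obtain ⟨m, hm, c, hc, rfl⟩ := exists_add_eq_of_isCoatom hM hC.not_le d
      exact ⟨⟨-c, neg_mem (S := LieIdeal F L) hc⟩, by simpa using hm⟩
    · rintro ⟨c, hc⟩ ⟨d, hd⟩ h
      simp only [LieIdeal.mem_comap, LieSubalgebra.coe_incl] at h ⊢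
      constructor
      · intro hk
        refine hD.mem_core_of_inf_le hM hC.not_le hDC' hd ?_
        simpa using sub_mem h (hC.le_max hk)
      · intro hk
        refine hC.mem_core_of_inf_le hM hD.not_le hCD' hc ?_
        simpa using sub_mem h (hD.le_max hk)
  · have hDC : ¬ ((D ⊓ C : LieIdeal F L) : LieSubalgebra F L) ≤ M := by rwa [inf_comm]
    have hKM : ((K ⊔ KD : LieIdeal F L) : LieSubalgebra F L) ≤ M := by
      intro x hx
      obtain ⟨k, hk, k', hk', rfl⟩ := (LieSubmodule.mem_sup _ _ _).1 hx
      exact add_mem (hC.le_max hk) (hD.le_max hk')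
    have mem_core {E N : LieIdeal F L} (hE : IsCompletionCore M E N) {x : L} (hx : x ∈ E)
        (hx' : x ∈ K ⊔ KD) : x ∈ N :=
      hE.le_core (E ⊓ (K ⊔ KD)) inf_le_left
        (le_trans (show E ⊓ (K ⊔ KD) ≤ K ⊔ KD from inf_le_right) hKM) ⟨hx, hx'⟩
    refine nonempty_quotient_lieEquiv_of_rel _ _ (fun c d => (c : L) - (d : L) ∈ K ⊔ KD)
      ?_ ?_ ?_ ?_ ?_ ?_
    · intro c d c' d' h h'
      simpa [add_sub_add_comm] using add_mem h h'
    · intro t c d h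
      simpa [smul_sub] using SMulMemClass.smul_mem t h
    · rintro ⟨c, hc⟩ ⟨d, hd⟩ ⟨c', hc'⟩ ⟨d', hd'⟩ h h'
      have key : ⁅c, c'⁆ - ⁅d, d'⁆ = ⁅c - d, c'⁆ + ⁅d, c' - d'⁆ := by
        simp only [sub_lie, lie_sub]
        abel
      change ⁅c, c'⁆ - ⁅d, d'⁆ ∈ K ⊔ KD
      rw [key]
      exact add_mem (lie_mem_left F L _ _ _ h) (lie_mem_right F L _ _ _ h')
    · rintro ⟨c, hc⟩
      obtain ⟨d, hd, h⟩ := hC.exists_sub_mem hCD hc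
      exact ⟨⟨d, hd⟩, (le_sup_left : K ≤ K ⊔ KD) h⟩
    · rintro ⟨d, hd⟩
      obtain ⟨c, hc, h⟩ := hD.exists_sub_mem hDC hd
      refine ⟨⟨c, hc⟩, (le_sup_right : KD ≤ K ⊔ KD) ?_⟩
      simpa using neg_mem h
    · rintro ⟨c, hc⟩ ⟨d, hd⟩ h
      simp only [LieIdeal.mem_comap, LieSubalgebra.coe_incl] at h ⊢
      constructor
      · intro hk
        refine mem_core hD hd ?_
        simpa using sub_mem ((le_sup_left : K ≤ K ⊔ KD) hk) h
      · intro hk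
        refine mem_core hC hc ?_
        simpa using add_mem h ((le_sup_right : KD ≤ K ⊔ KD) hk)

/-- Let `M` be a maximal subalgebra of `L`, `B` an ideal of `L` with `B ⊆ M`.
If `C/B` is an ideal completion of `M/B` in `L/B`, `K` is the preimage in `L` of the strict
core `k(C/B)`, and `D` is an ideal completion of `M` in `L`, then `C/K ≅ D/k(D)`. -/
theorem statement2 {F L : Type*} [Field F] [LieRing L] [LieAlgebra F L] [FiniteDimensional F L]
    (M : LieSubalgebra F L) (hM : IsCoatom M)
    (B : LieIdeal F L) (hBM : (B : LieSubalgebra F L) ≤ M)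
    (C : LieIdeal F L) (hBC : B ≤ C)
    (hC : IsCompletion (M.map (lieQuotMk B))
      ((C.map (lieQuotMk B) : LieIdeal F (L ⧸ B)) : LieSubalgebra F (L ⧸ B)))
    (K : LieIdeal F L)
    (hK : K = LieIdeal.comap (lieQuotMk B)
      (strictCore ((C.map (lieQuotMk B) : LieIdeal F (L ⧸ B)) : LieSubalgebra F (L ⧸ B))))
    (D : LieIdeal F L) (hD : IsCompletion M (D : LieSubalgebra F L)) :
    Nonempty (quotIn (C : LieSubalgebra F L) K ≃ₗ⁅F⁆ quotCore (D : LieSubalgebra F L)) := by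
  have hker : (lieQuotMk B).ker = B := by
    ext x
    rw [LieHom.mem_ker]
    exact LieSubmodule.Quotient.mk_eq_zero B
  subst hK
  exact ((IsCompletionCore.of_isCompletion hC).comap
    (LieSubmodule.Quotient.surjective_mk' B) (by rwa [hker]) (by rwa [hker])).nonempty_lieEquiv hM
    (IsCompletionCore.of_isCompletion hD)
end

section
/- Let L be a finite-dimensional Lie algebra over a field F, let M be a maximal subalgebra of L, and let B be an ideal of L with B ⊆ M. Then for every ideal completion C/B of M/B in L/B and every ideal completion D of M in L, dim((C/B)/k(C/B)) = dim(D/k(D)); that is, the ideal index satisfies η(L/B : M/B) = η(L : M). -/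
section

variable {F L : Type*} [Field F] [LieRing L] [LieAlgebra F L]

theorem lieQuotMk_surjective (B : LieIdeal F L) : Function.Surjective (lieQuotMk B) :=
  Submodule.Quotient.mk_surjective B.toSubmodule

theorem lieQuotMk_eq_iff (B : LieIdeal F L) (x y : L) :
    lieQuotMk B x = lieQuotMk B y ↔ x - y ∈ B :=
  Submodule.Quotient.eq B.toSubmodule

theorem lieQuotMk_mem_map_iff {M : LieSubalgebra F L} {B : LieIdeal F L}
    (hBM : (B : LieSubalgebra F L) ≤ M) (x : L) :
    lieQuotMk B x ∈ M.map (lieQuotMk B) ↔ x ∈ M := by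
  refine ⟨?_, fun hx => ⟨x, hx, rfl⟩⟩
  rintro ⟨y, hy, hyx⟩
  have hmem : y - x ∈ M := hBM ((lieQuotMk_eq_iff B y x).mp hyx)
  simpa using sub_mem (show y ∈ M from hy) hmem

theorem strictCore_le_self (C : LieIdeal F L) : strictCore (C : LieSubalgebra F L) ≤ C :=
  sSup_le fun _ hI => hI.le

/-- The strict core of a completion of `M` lies in `M`. -/
theorem IsCompletion.mem_of_mem_strictCore {M C : LieSubalgebra F L} (hC : IsCompletion M C) {x : L}
    (hx : x ∈ strictCore C) : x ∈ M := by
  have hle : (strictCore C).toSubmodule ≤ M.toSubmodule := by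
    rw [strictCore, LieSubmodule.sSup_toSubmodule]
    refine sSup_le ?_
    rintro _ ⟨I, hI, rfl⟩
    exact hC.2 I hI
  exact hle hx

/-- An ideal of `L` inside both `M` and a completion `C` of `M` lies in the strict core of `C`. -/
theorem IsCompletion.le_strictCore {M C : LieSubalgebra F L} (hC : IsCompletion M C)
    {I : LieIdeal F L} (hIC : (I : LieSubalgebra F L) ≤ C) (hIM : (I : LieSubalgebra F L) ≤ M) :
    I ≤ strictCore C :=
  le_sSup (lt_of_le_of_ne hIC fun h => hC.1 (h ▸ hIM))

theorem finrank_quotCore_eq_of_surjective {V : Type*} [AddCommGroup V] [Module F V]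
    (C : LieSubalgebra F L) (f : C →ₗ[F] V) (hf : Function.Surjective f)
    (hker : ∀ x : C, f x = 0 ↔ (x : L) ∈ strictCore C) :
    Module.finrank F (quotCore C) = Module.finrank F V := by
  have hk : (LieIdeal.comap C.incl (strictCore C)).toSubmodule = LinearMap.ker f := by
    ext x
    exact (hker x).symm
  exact ((Submodule.quotEquivOfEq _ _ hk).trans (f.quotKerEquivOfSurjective hf)).finrank_eq

/-- If `L = M + C = M + D` for ideals `C`, `D` with `C ∩ D ⊆ M`, and `C` is a completion of `M`,
then `C / k(C)` has the dimension of `L / M`. -/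
theorem IsCompletion.finrank_quotCore_of_inf_le {M : LieSubalgebra F L} {C D : LieIdeal F L}
    (hC : IsCompletion M (C : LieSubalgebra F L))
    (hMC : M.toSubmodule ⊔ C.toSubmodule = ⊤) (hMD : M.toSubmodule ⊔ D.toSubmodule = ⊤)
    (hCD : ∀ x ∈ C, x ∈ D → x ∈ M) :
    Module.finrank F (quotCore (C : LieSubalgebra F L)) =
      Module.finrank F (L ⧸ M.toSubmodule) := by
  let J : LieIdeal F L :=
    { M.toSubmodule ⊓ C.toSubmodule with
      lie_mem := by
        rintro x y ⟨hyM, hyC⟩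
        refine ⟨?_, C.lie_mem hyC⟩
        obtain ⟨m, hm, d, hd, rfl⟩ :=
          Submodule.mem_sup.mp (hMD ▸ Submodule.mem_top : x ∈ M.toSubmodule ⊔ D.toSubmodule)
        have hdy : ⁅d, y⁆ ∈ M := hCD _ (C.lie_mem hyC) (lie_mem_left F L D d y hd)
        have hmy : ⁅m, y⁆ ∈ M := M.lie_mem hm hyM
        change ⁅m + d, y⁆ ∈ M
        rw [add_lie]
        exact add_mem hmy hdy }
  refine finrank_quotCore_eq_of_surjective _
    (M.toSubmodule.mkQ ∘ₗ (C : LieSubalgebra F L).toSubmodule.subtype) ?_ ?_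
  · intro q
    obtain ⟨x, rfl⟩ := M.toSubmodule.mkQ_surjective q
    obtain ⟨m, hm, c, hc, rfl⟩ :=
      Submodule.mem_sup.mp (hMC ▸ Submodule.mem_top : x ∈ M.toSubmodule ⊔ C.toSubmodule)
    refine ⟨⟨c, hc⟩, ?_⟩
    change M.toSubmodule.mkQ c = _
    have hm0 : M.toSubmodule.mkQ m = 0 := (Submodule.Quotient.mk_eq_zero _).mpr hm
    rw [map_add, hm0, zero_add]
  · intro x
    refine (Submodule.Quotient.mk_eq_zero _).trans
      ⟨fun hx => ?_, fun hx => hC.mem_of_mem_strictCore hx⟩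
    exact hC.le_strictCore (I := J) (fun _ h => h.2) (fun _ h => h.1) ⟨hx, x.2⟩

/-- A maximal subalgebra and an ideal not inside it span the whole Lie algebra. -/
theorem sup_toSubmodule_eq_top_of_isCoatom {M : LieSubalgebra F L} (hM : IsCoatom M)
    {C : LieIdeal F L} (hC : ¬ (C : LieSubalgebra F L) ≤ M) :
    M.toSubmodule ⊔ C.toSubmodule = ⊤ := by
  let S : LieSubalgebra F L :=
    { M.toSubmodule ⊔ C.toSubmodule with
      lie_mem' := by
        intro x y hx hy
        obtain ⟨m, hm, c, hc, rfl⟩ := Submodule.mem_sup.mp hx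
        obtain ⟨n, hn, d, hd, rfl⟩ := Submodule.mem_sup.mp hy
        have hmn : ⁅m, n⁆ ∈ M := M.lie_mem hm hn
        have hcd : ⁅m, d⁆ + ⁅c, n + d⁆ ∈ C :=
          add_mem (C.lie_mem hd) (lie_mem_left F L C c _ hc)
        refine Submodule.mem_sup.mpr ⟨_, hmn, _, hcd, ?_⟩
        rw [add_lie, lie_add m, add_assoc] }
  have hMS : M ≤ S := fun x hx => Submodule.mem_sup_left (S := M.toSubmodule) hx
  have hCS : (C : LieSubalgebra F L) ≤ S :=
    fun x hx => Submodule.mem_sup_right (T := C.toSubmodule) hx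
  have hS : S = ⊤ := hM.2 S (lt_of_le_of_ne hMS fun h => hC (h ▸ hCS))
  exact congrArg LieSubalgebra.toSubmodule hS

/-- If the ideal completion `D` of `M` maps into the ideal completion `Cq` of `M / B`, then
`Cq / k(Cq)` and `D / k(D)` have the same dimension. -/
theorem IsCompletion.finrank_quotCore_eq_of_le_comap {M : LieSubalgebra F L} {B : LieIdeal F L}
    (hBM : (B : LieSubalgebra F L) ≤ M) {Cq : LieIdeal F (L ⧸ B)}
    (hCq : IsCompletion (M.map (lieQuotMk B)) (Cq : LieSubalgebra F (L ⧸ B)))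
    {D : LieIdeal F L} (hD : IsCompletion M (D : LieSubalgebra F L))
    (hDC : D ≤ LieIdeal.comap (lieQuotMk B) Cq) :
    Module.finrank F (quotCore (Cq : LieSubalgebra F (L ⧸ B))) =
      Module.finrank F (quotCore (D : LieSubalgebra F L)) := by
  have hDCmem : ∀ x ∈ D, lieQuotMk B x ∈ Cq := fun x hx => LieIdeal.mem_comap.mp (hDC hx)
  have hmap : LieIdeal.map (lieQuotMk B) D = Cq := by
    by_contra hne
    have hlt : ((LieIdeal.map (lieQuotMk B) D : LieIdeal F (L ⧸ B)) :
        LieSubalgebra F (L ⧸ B)) < Cq :=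
      lt_of_le_of_ne (LieIdeal.map_le_iff_le_comap.mpr hDC)
        fun h => hne (SetLike.ext fun q => SetLike.ext_iff.mp h q)
    refine hD.1 fun x hx => (lieQuotMk_mem_map_iff hBM x).mp (hCq.2 _ hlt ?_)
    exact LieIdeal.mem_map hx
  let f : (D : LieSubalgebra F L) →ₗ[F] (Cq : LieSubalgebra F (L ⧸ B)) :=
    (lieQuotMk B : L →ₗ[F] L ⧸ B).restrict (p := D.toSubmodule) (q := Cq.toSubmodule) hDCmem
  let K : LieIdeal F (Cq : LieSubalgebra F (L ⧸ B)) :=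
    LieIdeal.comap (Cq : LieSubalgebra F (L ⧸ B)).incl (strictCore (Cq : LieSubalgebra F (L ⧸ B)))
  refine (finrank_quotCore_eq_of_surjective _ (K.toSubmodule.mkQ ∘ₗ f) ?_ ?_).symm
  · refine K.toSubmodule.mkQ_surjective.comp fun y => ?_
    have hy : (y : L ⧸ B) ∈ LieIdeal.map (lieQuotMk B) D := hmap ▸ y.2
    obtain ⟨x, hx⟩ := LieIdeal.mem_map_of_surjective (lieQuotMk_surjective B) hy
    exact ⟨x, Subtype.ext hx⟩
  · intro x
    refine (Submodule.Quotient.mk_eq_zero _).trans ?_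
    change lieQuotMk B x ∈ strictCore (Cq : LieSubalgebra F (L ⧸ B)) ↔ _
    constructor
    · intro hx
      refine hD.le_strictCore
        (I := LieIdeal.comap (lieQuotMk B) (strictCore (Cq : LieSubalgebra F (L ⧸ B))) ⊓ D)
        (fun _ h => h.2) (fun y h => ?_) ⟨hx, x.2⟩
      exact (lieQuotMk_mem_map_iff hBM y).mp (hCq.mem_of_mem_strictCore h.1)
    · intro hx
      refine hCq.le_strictCore
        (I := LieIdeal.map (lieQuotMk B) (strictCore (D : LieSubalgebra F L))) ?_ ?_
        (LieIdeal.mem_map hx)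
      · exact LieIdeal.map_le_iff_le_comap.mpr ((strictCore_le_self D).trans hDC)
      · intro y hy
        obtain ⟨z, rfl⟩ := LieIdeal.mem_map_of_surjective (lieQuotMk_surjective B) hy
        exact ⟨z, hD.mem_of_mem_strictCore z.2, rfl⟩

theorem sup_map_lieQuotMk_eq_top {M : LieSubalgebra F L} {B C : LieIdeal F L}
    (h : M.toSubmodule ⊔ C.toSubmodule = ⊤) {Cq : LieIdeal F (L ⧸ B)}
    (hC : ∀ x ∈ C, lieQuotMk B x ∈ Cq) :
    (M.map (lieQuotMk B)).toSubmodule ⊔ Cq.toSubmodule = ⊤ := by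
  refine eq_top_iff.mpr fun q _ => ?_
  obtain ⟨x, rfl⟩ := lieQuotMk_surjective B q
  obtain ⟨m, hm, c, hc, rfl⟩ :=
    Submodule.mem_sup.mp (h ▸ Submodule.mem_top : x ∈ M.toSubmodule ⊔ C.toSubmodule)
  exact Submodule.mem_sup.mpr ⟨_, ⟨m, hm, rfl⟩, _, hC c hc, (map_add _ _ _).symm⟩

end

/-- Let `M` be a maximal subalgebra of `L` and `B` an ideal of `L` with `B ⊆ M`.
For every ideal completion `Cq` of `M/B` in `L/B` and every ideal completion `D` of `M` in `L`,
`dim (Cq / k(Cq)) = dim (D / k(D))`; that is, `η(L/B : M/B) = η(L : M)`. -/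
theorem statement3 {F L : Type*} [Field F] [LieRing L] [LieAlgebra F L] [FiniteDimensional F L]
    (M : LieSubalgebra F L) (hM : IsCoatom M)
    (B : LieIdeal F L) (hBM : (B : LieSubalgebra F L) ≤ M)
    (Cq : LieIdeal F (L ⧸ B))
    (hCq : IsCompletion (M.map (lieQuotMk B)) (Cq : LieSubalgebra F (L ⧸ B)))
    (D : LieIdeal F L) (hD : IsCompletion M (D : LieSubalgebra F L)) :
    Module.finrank F (quotCore (Cq : LieSubalgebra F (L ⧸ B))) =
      Module.finrank F (quotCore (D : LieSubalgebra F L)) := by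
  have hCM : ¬ ((LieIdeal.comap (lieQuotMk B) Cq : LieIdeal F L) : LieSubalgebra F L) ≤ M := by
    intro h
    refine hCq.1 fun q hq => ?_
    obtain ⟨x, rfl⟩ := lieQuotMk_surjective B q
    exact ⟨x, h (LieIdeal.mem_comap.mpr hq), rfl⟩
  by_cases hDC : D ≤ LieIdeal.comap (lieQuotMk B) Cq
  · exact hCq.finrank_quotCore_eq_of_le_comap hBM hD hDC
  have hlt : ((LieIdeal.comap (lieQuotMk B) Cq ⊓ D : LieIdeal F L) : LieSubalgebra F L) < D := by
    refine lt_of_le_of_ne (fun _ h => h.2) fun h => hDC fun x hx => ?_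
    exact ((SetLike.ext_iff.mp h x).mpr hx).1
  have hinf : ∀ x ∈ D, x ∈ LieIdeal.comap (lieQuotMk B) Cq → x ∈ M :=
    fun x hxD hxC => hD.2 _ hlt ⟨hxC, hxD⟩
  have hMC := sup_toSubmodule_eq_top_of_isCoatom hM hCM
  have hMD := sup_toSubmodule_eq_top_of_isCoatom hM hD.1
  have hMapD : ∀ x ∈ D, lieQuotMk B x ∈ LieIdeal.map (lieQuotMk B) D :=
    fun x hx => LieIdeal.mem_map hx
  have hinfq : ∀ q ∈ Cq, q ∈ LieIdeal.map (lieQuotMk B) D → q ∈ M.map (lieQuotMk B) := by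
    intro q hqC hqD
    obtain ⟨x, rfl⟩ := LieIdeal.mem_map_of_surjective (lieQuotMk_surjective B) hqD
    exact ⟨x, hinf x x.2 (LieIdeal.mem_comap.mpr hqC), rfl⟩
  rw [hD.finrank_quotCore_of_inf_le hMD hMC hinf,
    hCq.finrank_quotCore_of_inf_le
      (sup_map_lieQuotMk_eq_top hMC fun _ hx => LieIdeal.mem_comap.mp hx)
      (sup_map_lieQuotMk_eq_top hMD hMapD) hinfq]
  exact (Submodule.quotientQuotientEquivQuotient B.toSubmodule M.toSubmodule hBM).finrank_eq
end

section
/- Let L be a finite-dimensional Lie algebra over an algebraically closed field F and let M be a maximal subalgebra of L. If M has a maximal completion C (a maximal element of I(M) under inclusion) such that [C,C] ⊆ k(C), then M has an abelian ideal completion in L. -/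
/-- A pairwise commuting family of endomorphisms of a nontrivial finite-dimensional vector space
over an algebraically closed field has a common eigenvector. -/
theorem exists_common_eigenvector {F V ι : Type*} [Field F] [IsAlgClosed F] [AddCommGroup V]
    [Module F V] [FiniteDimensional F V] [Nontrivial V] (f : ι → Module.End F V)
    (hf : ∀ i j, Commute (f i) (f j)) :
    ∃ v : V, v ≠ 0 ∧ ∀ i, ∃ a : F, f i v = a • v := by
  obtain ⟨W, ⟨hW0, hWf⟩, hmin⟩ := WellFounded.has_min
    (wellFounded_lt (α := Submodule F V))
    {W : Submodule F V | W ≠ ⊥ ∧ ∀ i, ∀ w ∈ W, f i w ∈ W}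
    ⟨⊤, top_ne_bot, fun _ _ _ => Submodule.mem_top⟩
  obtain ⟨v, hvW, hv0⟩ := W.ne_bot_iff.mp hW0
  refine ⟨v, hv0, fun i => ?_⟩
  have : Nontrivial W := (Submodule.nontrivial_iff_ne_bot).mpr hW0
  obtain ⟨a, ha⟩ := Module.End.exists_eigenvalue ((f i).restrict (hWf i))
  obtain ⟨w, hw⟩ := ha.exists_hasEigenvector
  have hwa : f i w = a • (w : V) := congrArg Subtype.val hw.apply_eq_smul
  have hle : W ≤ Module.End.eigenspace (f i) a := by
    refine inf_eq_left.mp (eq_of_le_of_not_lt inf_le_left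
      (hmin _ ⟨?_, fun j u hu => ⟨hWf j u hu.1, ?_⟩⟩))
    · refine (Submodule.ne_bot_iff _).mpr
        ⟨w, ⟨w.2, Module.End.mem_eigenspace_iff.mpr hwa⟩, fun h => hw.2 (Subtype.ext h)⟩
    · have hu' := Module.End.mem_eigenspace_iff.mp hu.2
      refine Module.End.mem_eigenspace_iff.mpr ?_
      rw [← Module.End.mul_apply, (hf i j).eq, Module.End.mul_apply, hu', map_smul]
  exact ⟨a, Module.End.mem_eigenspace_iff.mp (hle hvW)⟩

section AbelianModulo

variable {F L : Type*} [Field F] [LieRing L] [LieAlgebra F L]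

/-- A proper subalgebra that is abelian modulo an ideal `K` it contains has, over an algebraically
closed field, an eigenvector in its action on the quotient by itself. -/
theorem exists_notMem_lie_sub_smul_mem [IsAlgClosed F] [FiniteDimensional F L]
    {C : LieSubalgebra F L} {K : LieIdeal F L} (hK : (K : LieSubalgebra F L) ≤ C)
    (hab : ∀ x ∈ C, ∀ y ∈ C, ⁅x, y⁆ ∈ K) (hC : C ≠ ⊤) :
    ∃ x, x ∉ C ∧ ∀ c ∈ C, ∃ a : F, ⁅c, x⁆ - a • x ∈ C := by
  have hCtop : C.toSubmodule ≠ ⊤ := by simpa using hC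
  have : Nontrivial (L ⧸ C.toSubmodule) := Submodule.Quotient.nontrivial_iff.mpr hCtop
  let f : C → Module.End F (L ⧸ C.toSubmodule) := fun c =>
    C.toSubmodule.mapQ C.toSubmodule (LieAlgebra.ad F L c) fun y hy => C.lie_mem c.2 hy
  have hf : ∀ c d, Commute (f c) (f d) := by
    intro c d
    refine LinearMap.ext fun q => ?_
    obtain ⟨y, rfl⟩ := Submodule.Quotient.mk_surjective _ q
    refine (Submodule.Quotient.eq _).mpr (hK ?_)
    have h := lie_mem_left F L K _ y (hab c c.2 d d.2)
    rwa [lie_lie] at h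
  obtain ⟨v, hv0, hv⟩ := exists_common_eigenvector f hf
  obtain ⟨x, rfl⟩ := Submodule.Quotient.mk_surjective _ v
  refine ⟨x, fun hx => hv0 ((Submodule.Quotient.mk_eq_zero _).mpr hx), fun c hc => ?_⟩
  obtain ⟨a, ha⟩ := hv ⟨c, hc⟩
  exact ⟨a, (Submodule.Quotient.eq _).mp ha⟩

theorem Submodule.mem_sup_span_singleton_iff {V : Type*} [AddCommGroup V] [Module F V]
    {W : Submodule F V} {x y : V} :
    y ∈ W ⊔ Submodule.span F {x} ↔ ∃ w ∈ W, ∃ t : F, w + t • x = y := by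
  simp [Submodule.mem_sup, Submodule.mem_span_singleton]

/-- The subalgebra spanned by a subalgebra `C` and an eigenvector `x` of `C` modulo `C`. -/
def LieSubalgebra.adjoin (C : LieSubalgebra F L) (x : L)
    (hx : ∀ c ∈ C, ∃ a : F, ⁅c, x⁆ - a • x ∈ C) : LieSubalgebra F L :=
  { C.toSubmodule ⊔ Submodule.span F {x} with
    lie_mem' := by
      have key : ∀ c ∈ C, ⁅c, x⁆ ∈ C.toSubmodule ⊔ Submodule.span F {x} := fun c hc => by
        obtain ⟨a, ha⟩ := hx c hc
        rw [← sub_add_cancel ⁅c, x⁆ (a • x)]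
        exact Submodule.add_mem_sup ha
          (Submodule.smul_mem _ _ (Submodule.mem_span_singleton_self x))
      intro y z hy hz
      obtain ⟨c, hc, s, rfl⟩ := Submodule.mem_sup_span_singleton_iff.mp hy
      obtain ⟨d, hd, t, rfl⟩ := Submodule.mem_sup_span_singleton_iff.mp hz
      have h : ⁅c + s • x, d + t • x⁆ = ⁅c, d⁆ + ⁅t • c - s • d, x⁆ := by
        simp only [add_lie, lie_add, smul_lie, lie_smul, sub_lie, lie_self, smul_zero, add_zero]
        rw [← lie_skew x d]
        module
      exact h ▸ add_mem (Submodule.mem_sup_left (C.lie_mem hc hd))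
        (key _ (C.toSubmodule.sub_mem (C.smul_mem t hc) (C.smul_mem s hd))) }

theorem LieSubalgebra.mem_adjoin_iff {C : LieSubalgebra F L} {x : L}
    {hx : ∀ c ∈ C, ∃ a : F, ⁅c, x⁆ - a • x ∈ C} {y : L} :
    y ∈ C.adjoin x hx ↔ ∃ c ∈ C, ∃ t : F, c + t • x = y :=
  Submodule.mem_sup_span_singleton_iff

/-- Brackets of elements of the form `⁅c, x⁆`, with `c` in a subalgebra `C` that is abelian modulo
an ideal `K` and `x` an eigenvector of `C` modulo `C`, lie in `K`. -/
theorem lie_lie_mem_of_eigenvector {C : LieSubalgebra F L} {K : LieIdeal F L}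
    (hab : ∀ x ∈ C, ∀ y ∈ C, ⁅x, y⁆ ∈ K) {x : L}
    (hx : ∀ c ∈ C, ∃ a : F, ⁅c, x⁆ - a • x ∈ C) {c d : L} (hc : c ∈ C) (hd : d ∈ C) :
    ⁅⁅c, x⁆, ⁅d, x⁆⁆ ∈ K := by
  obtain ⟨a, ha⟩ := hx c hc
  obtain ⟨b, hb⟩ := hx d hd
  obtain ⟨u, hu⟩ : ∃ u, u = ⁅c, x⁆ - a • x := ⟨_, rfl⟩
  obtain ⟨w, hw⟩ : ∃ w, w = ⁅d, x⁆ - b • x := ⟨_, rfl⟩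
  rw [← hu] at ha
  rw [← hw] at hb
  have hcx : ⁅c, x⁆ = a • x + u := by rw [hu]; abel
  have hdx : ⁅d, x⁆ = b • x + w := by rw [hw]; abel
  have hrel : b • u - a • w ∈ K := by
    have h1 := lie_mem_left F L K _ x (hab c hc d hd)
    have h2 := hab c hc w hb
    have h3 := hab d hd u ha
    have h : b • u - a • w = ⁅⁅c, d⁆, x⁆ - ⁅c, w⁆ + ⁅d, u⁆ := by
      rw [lie_lie, hcx, hdx, lie_add, lie_add, lie_smul, lie_smul, hcx, hdx]
      module
    rw [h]
    exact add_mem (sub_mem h1 h2) h3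
  have h : ⁅⁅c, x⁆, ⁅d, x⁆⁆ = ⁅b • u - a • w, x⁆ + ⁅u, w⁆ := by
    rw [hcx, hdx]
    simp only [add_lie, lie_add, smul_lie, lie_smul, sub_lie, lie_self, smul_zero, zero_add]
    rw [← lie_skew x w]
    module
  rw [h]
  exact add_mem (lie_mem_left F L K _ x hrel) (hab u ha w hb)

/-- If `C` is abelian modulo `K` and `x` is an eigenvector of `C` modulo `C`, then the second
derived algebra of any ideal contained in `C + F x` lies in `K`. -/
theorem lie_lie_le_of_le_adjoin {C : LieSubalgebra F L} {K : LieIdeal F L}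
    (hab : ∀ x ∈ C, ∀ y ∈ C, ⁅x, y⁆ ∈ K) {x : L}
    (hx : ∀ c ∈ C, ∃ a : F, ⁅c, x⁆ - a • x ∈ C) {A : LieIdeal F L}
    (hA : (A : LieSubalgebra F L) ≤ C.adjoin x hx) :
    ⁅⁅A, A⁆, ⁅A, A⁆⁆ ≤ K := by
  have key : ∀ y ∈ ⁅A, A⁆, ∃ e ∈ C, y - ⁅e, x⁆ ∈ K := by
    intro y hy
    rw [← LieSubmodule.mem_toSubmodule, LieSubmodule.lieIdeal_oper_eq_linear_span'] at hy
    induction hy using Submodule.span_induction with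
    | mem y hy =>
      obtain ⟨p, hp, q, hq, rfl⟩ := hy
      obtain ⟨c, hc, s, rfl⟩ := LieSubalgebra.mem_adjoin_iff.mp (hA hp)
      obtain ⟨d, hd, t, rfl⟩ := LieSubalgebra.mem_adjoin_iff.mp (hA hq)
      refine ⟨t • c - s • d, C.toSubmodule.sub_mem (C.smul_mem t hc) (C.smul_mem s hd), ?_⟩
      have h : ⁅c + s • x, d + t • x⁆ - ⁅t • c - s • d, x⁆ = ⁅c, d⁆ := by
        simp only [add_lie, lie_add, smul_lie, lie_smul, sub_lie, lie_self, smul_zero, add_zero]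
        rw [← lie_skew x d]
        module
      exact h ▸ hab c hc d hd
    | zero => exact ⟨0, C.zero_mem, by simp⟩
    | add y z _ _ hy hz =>
      obtain ⟨e, he, hye⟩ := hy
      obtain ⟨g, hg, hzg⟩ := hz
      refine ⟨e + g, C.add_mem he hg, ?_⟩
      rw [add_lie, add_sub_add_comm]
      exact add_mem hye hzg
    | smul t y _ hy =>
      obtain ⟨e, he, hye⟩ := hy
      refine ⟨t • e, C.smul_mem t he, ?_⟩
      rw [smul_lie, ← smul_sub]
      exact K.smul_mem t hye
  rw [LieSubmodule.lie_le_iff]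
  intro y hy z hz
  obtain ⟨e, he, hye⟩ := key y hy
  obtain ⟨g, hg, hzg⟩ := key z hz
  have h : ⁅y, z⁆ = ⁅y - ⁅e, x⁆, z⁆ + ⁅⁅e, x⁆, z - ⁅g, x⁆⁆ + ⁅⁅e, x⁆, ⁅g, x⁆⁆ := by
    rw [sub_lie, lie_sub]
    abel
  rw [h]
  exact add_mem (add_mem (lie_mem_left F L K _ _ hye) (lie_mem_right F L K _ _ hzg))
    (lie_lie_mem_of_eigenvector hab hx he hg)

/-- The strict core of a completion of `M` is contained in `M`. -/
theorem IsCompletion.strictCore_le {M C : LieSubalgebra F L} (h : IsCompletion M C) :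
    (strictCore C : LieSubalgebra F L) ≤ M := by
  have : (strictCore C).toSubmodule ≤ M.toSubmodule := by
    rw [strictCore, LieSubmodule.sSup_toSubmodule]
    refine sSup_le ?_
    rintro _ ⟨I, hI, rfl⟩
    exact h.2 I hI
  exact this

theorem strictCore_le (C : LieSubalgebra F L) : (strictCore C : LieSubalgebra F L) ≤ C := by
  have : (strictCore C).toSubmodule ≤ C.toSubmodule := by
    rw [strictCore, LieSubmodule.sSup_toSubmodule]
    refine sSup_le ?_
    rintro _ ⟨I, hI, rfl⟩
    exact le_of_lt (show (I : LieSubalgebra F L) < C from hI)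
  exact this

/-- An ideal not contained in `M` contains an ideal completion of `M`. -/
theorem exists_isCompletion_le [FiniteDimensional F L] {M : LieSubalgebra F L} {I : LieIdeal F L}
    (hI : ¬ (I : LieSubalgebra F L) ≤ M) :
    ∃ A : LieIdeal F L, A ≤ I ∧ IsCompletion M (A : LieSubalgebra F L) := by
  have := LieSubmodule.wellFoundedLT_of_isArtinian F L L
  obtain ⟨A, ⟨hAI, hAM⟩, hmin⟩ := WellFounded.has_min
    (wellFounded_lt (α := LieIdeal F L))
    {A : LieIdeal F L | A ≤ I ∧ ¬ (A : LieSubalgebra F L) ≤ M} ⟨I, le_rfl, hI⟩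
  refine ⟨A, hAI, hAM, fun J hJ => ?_⟩
  by_contra hJM
  exact hmin J ⟨le_trans (show J ≤ A from hJ.le) hAI, hJM⟩ hJ

end AbelianModulo

/-- Let `L` be a finite-dimensional Lie algebra over an algebraically closed
field and `M` a maximal subalgebra of `L`. If `M` has a maximal completion `C` with
`[C,C] ⊆ k(C)`, then `M` has an abelian ideal completion in `L`. -/
theorem statement13 {F L : Type*} [Field F] [IsAlgClosed F] [LieRing L] [LieAlgebra F L]
    [FiniteDimensional F L]
    (M : LieSubalgebra F L) (hM : IsCoatom M)
    (C : LieSubalgebra F L) (hC : IsMaxCompletion M C)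
    (hab : ∀ x ∈ C, ∀ y ∈ C, ⁅x, y⁆ ∈ strictCore C) :
    ∃ A : LieIdeal F L, IsCompletion M (A : LieSubalgebra F L) ∧
      ⁅A, A⁆ ≤ strictCore (A : LieSubalgebra F L) := by
  by_cases hCtop : C = ⊤
  · have hA : ((⊤ : LieIdeal F L) : LieSubalgebra F L) = C := hCtop ▸ rfl
    refine ⟨⊤, hA ▸ hC.1, ?_⟩
    rw [LieSubmodule.lie_le_iff, hA]
    exact fun x _ y _ => hab x (hCtop ▸ LieSubalgebra.mem_top x) y (hCtop ▸ LieSubalgebra.mem_top y)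
  obtain ⟨x, hxC, hx⟩ := exists_notMem_lie_sub_smul_mem (strictCore_le C) hab hCtop
  have hCD : C ≤ C.adjoin x hx := fun c hc =>
    LieSubalgebra.mem_adjoin_iff.mpr ⟨c, hc, 0, by simp⟩
  have hxD : x ∈ C.adjoin x hx :=
    LieSubalgebra.mem_adjoin_iff.mpr ⟨0, C.zero_mem, 1, by simp⟩
  have hD : ¬ IsCompletion M (C.adjoin x hx) := fun h => hxC ((hC.2 _ h hCD).symm ▸ hxD)
  obtain ⟨I, hID, hIM⟩ : ∃ I : LieIdeal F L,
      (I : LieSubalgebra F L) < C.adjoin x hx ∧ ¬ (I : LieSubalgebra F L) ≤ M := by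
    by_contra! h
    exact hD ⟨fun hDM => hC.1.1 (hCD.trans hDM), h⟩
  obtain ⟨A, hAI, hA⟩ := exists_isCompletion_le hIM
  refine ⟨A, hA, ?_⟩
  rcases (LieSubmodule.lie_le_right A A).lt_or_eq with hlt | heq
  · exact le_sSup (show (⁅A, A⁆ : LieIdeal F L) ∈
      {J : LieIdeal F L | (J : LieSubalgebra F L) < A} from hlt)
  · have hAD : (A : LieSubalgebra F L) ≤ C.adjoin x hx := fun y hy => hID.le (hAI hy)
    have hAK := lie_lie_le_of_le_adjoin hab hx hAD
    rw [heq, heq] at hAK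
    exact absurd (fun y hy => hC.1.strictCore_le (hAK hy)) hA.1
end
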